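/- The number of n×n alternating sign matrices that are uniquely determined by their antidiagonal X-rays equals the n-th Catalan number C_n = (1/(n+1))·binom(2n, n). -/

import Mathlib

open Finset Matrix

/-- An alternating sign matrix: entries in {-1,0,1}, all row and column sums
equal 1, and consecutive nonzero entries in each row and column have
opposite signs. -/
def IsASM {n : ℕ} (A : Matrix (Fin n) (Fin n) ℤ) : Prop :=
  (∀ i j, A i j = -1 ∨ A i j = 0 ∨ A i j = 1) ∧
  (∀ i, ∑ j, A i j = 1) ∧
  (∀ j, ∑ i, A i j = 1) ∧
  (∀ i (j₁ j₂ : Fin n), j₁ < j₂ → A i j₁ ≠ 0 → A i j₂ ≠ 0 →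
    (∀ j, j₁ < j → j < j₂ → A i j = 0) → A i j₂ = -A i j₁) ∧
  (∀ j (i₁ i₂ : Fin n), i₁ < i₂ → A i₁ j ≠ 0 → A i₂ j ≠ 0 →
    (∀ i, i₁ < i → i < i₂ → A i j = 0) → A i₂ j = -A i₁ j)

/-- The `k`-th antidiagonal sum (1-based: cells `(i,j)` with `i+j = k+1`,
i.e. `0`-based indices with `i+j+1 = k`), for `k = 1, …, 2n-1`. -/
def xray {n : ℕ} (A : Matrix (Fin n) (Fin n) ℤ) (k : ℕ) : ℤ :=
  ∑ i : Fin n, ∑ j : Fin n, if (i : ℕ) + (j : ℕ) + 1 = k then A i j else 0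

/-- `A` is the unique ASM with its X-ray. -/
def DeterminedByXray {n : ℕ} (A : Matrix (Fin n) (Fin n) ℤ) : Prop :=
  ∀ B : Matrix (Fin n) (Fin n) ℤ, IsASM B → (∀ k, xray B k = xray A k) → B = A

/-- The permutation matrix of `σ`. -/
def permMatrix {n : ℕ} (σ : Equiv.Perm (Fin n)) : Matrix (Fin n) (Fin n) ℤ :=
  fun i j => if σ j = i then 1 else 0

/-- Corner-sum functions of (identity-extended) alternating sign matrices of size `n`. -/
structure Ht (n : ℕ) (C : ℕ → ℕ → ℤ) : Prop where
  z1 : ∀ j, C 0 j = 0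
  z2 : ∀ i, C i 0 = 0
  r1 : ∀ i j, C i j ≤ C (i+1) j
  r2 : ∀ i j, C (i+1) j ≤ C i j + 1
  c1 : ∀ i j, C i j ≤ C i (j+1)
  c2 : ∀ i j, C i (j+1) ≤ C i j + 1
  b : ∀ i j, n ≤ i ∨ n ≤ j → C i j = min (i:ℤ) j

/-- antidiagonal sums -/
def adS (C : ℕ → ℕ → ℤ) (k : ℕ) : ℤ := ∑ j ∈ range (k+1), C (k-j) j

/-- level sets on antidiagonals -/
def lev (C : ℕ → ℕ → ℤ) (k y : ℕ) : Finset ℕ := (range (k+1)).filter (fun j => (y:ℤ) ≤ C (k-j) j)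

theorem Ht.nonneg {n C} (h : Ht n C) (i j : ℕ) : 0 ≤ C i j := by
  induction i with
  | zero => rw [h.z1]
  | succ i ih => exact ih.trans (h.r1 i j)

theorem Ht.le1 {n C} (h : Ht n C) (i j : ℕ) : C i j ≤ i := by
  induction i with
  | zero => rw [h.z1]; simp
  | succ i ih => have := h.r2 i j; push_cast; linarith

theorem Ht.le2 {n C} (h : Ht n C) (i j : ℕ) : C i j ≤ j := by
  induction j with
  | zero => rw [h.z2]; simp
  | succ l ih => have := h.c2 i l; push_cast; linarith

theorem Ht.ge {n C} (h : Ht n C) (i j : ℕ) (hi : i ≤ n) (hj : j ≤ n) : (i:ℤ) + j - n ≤ C i j := by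
  have key : ∀ d, C (i+d) j ≤ C i j + d := by
    intro d
    induction d with
    | zero => simp
    | succ d ih => have := h.r2 (i+d) j; push_cast; rw [← add_assoc]; linarith
  have := key (n - i)
  rw [show i + (n-i) = n by omega, h.b n j (Or.inl le_rfl)] at this
  omega

theorem mem_lev {C k y j} : j ∈ lev C k y ↔ j ≤ k ∧ (y:ℤ) ≤ C (k-j) j := by
  simp [lev]

theorem mem_lev' {C} {y i j : ℕ} : j ∈ lev C (i+j) y ↔ (y:ℤ) ≤ C i j := by
  simp [mem_lev]

theorem Ht.lev_bd {n C} (h : Ht n C) {k y j : ℕ} (hj : j ∈ lev C k y) : y ≤ j ∧ j + y ≤ k := by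
  rw [mem_lev] at hj
  have := h.le1 (k-j) j
  have := h.le2 (k-j) j
  omega

theorem Ht.lev_a {n C} (h : Ht n C) {k y : ℕ} (hs : 0 < (lev C k y).card) :
    (lev C k y).card + 1 ≤ (lev C (k+1) y).card := by
  apply Finset.card_lt_card
  have hne := Finset.card_pos.mp hs
  have hm := Finset.max'_mem _ hne
  set M := (lev C k y).max' hne with hM
  rw [Finset.ssubset_iff_of_subset]
  · refine ⟨M + 1, ?_, ?_⟩
    · rw [mem_lev] at hm ⊢
      have := h.c1 (k - M) M
      rw [show k + 1 - (M+1) = k - M by omega]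
      exact ⟨by omega, by linarith⟩
    · intro hc
      have := Finset.le_max' _ _ hc
      omega
  · intro j hj
    rw [mem_lev] at hj ⊢
    have := h.r1 (k - j) j
    rw [show k + 1 - j = k - j + 1 by omega]
    exact ⟨by omega, by linarith⟩

theorem Ht.lev_b {n C} (h : Ht n C) {k y : ℕ} (hs : 0 < (lev C (k+1) (y+1)).card) :
    (lev C (k+1) (y+1)).card + 1 ≤ (lev C k y).card := by
  apply Finset.card_lt_card
  have hne := Finset.card_pos.mp hs
  have hm := Finset.min'_mem _ hne
  set M := (lev C (k+1) (y+1)).min' hne with hM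
  rw [Finset.ssubset_iff_of_subset]
  · have hb := h.lev_bd hm
    obtain ⟨N, hN⟩ : ∃ N, M = N + 1 := ⟨M - 1, by omega⟩
    rw [hN] at hm hb
    refine ⟨N, ?_, ?_⟩
    · rw [mem_lev] at hm ⊢
      have := h.c2 (k - N) N
      rw [show k + 1 - (N+1) = k - N by omega] at hm
      push_cast at hm
      exact ⟨by omega, by linarith⟩
    · intro hc
      have := Finset.min'_le _ _ hc
      omega
  · intro j hj
    have hb := h.lev_bd hj
    rw [mem_lev] at hj ⊢
    have := h.r2 (k - j) j
    rw [show k + 1 - j = k - j + 1 by omega] at hj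
    push_cast at hj
    exact ⟨by omega, by linarith⟩

theorem Ht.lev_le {n C} (h : Ht n C) {k y : ℕ} (hs : 0 < (lev C k y).card) :
    (lev C k y).card + 2 * y ≤ k + 1 := by
  have : lev C k y ⊆ Finset.Icc y (k - y) := by
    intro j hj
    have := h.lev_bd hj
    rw [Finset.mem_Icc]; omega
  have h2 := Finset.card_le_card this
  obtain ⟨j, hj⟩ := Finset.card_pos.mp hs
  have := h.lev_bd hj
  rw [Nat.card_Icc] at h2
  omega

/-- layer cake -/
theorem adS_eq {C : ℕ → ℕ → ℤ} {k : ℕ} (h0 : ∀ i j, 0 ≤ C i j) (h1 : ∀ i j, C i j ≤ i) :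
    adS C k = ∑ y ∈ Finset.Icc 1 k, ((lev C k y).card : ℤ) := by
  have hc : ∀ y ∈ Finset.Icc 1 k, ((lev C k y).card : ℤ)
      = ∑ j ∈ range (k+1), if (y:ℤ) ≤ C (k-j) j then 1 else 0 := by
    intro y _
    simp [lev]
  rw [Finset.sum_congr rfl hc, Finset.sum_comm, adS]
  apply Finset.sum_congr rfl
  intro j hj
  rw [Finset.mem_range] at hj
  have e0 := h0 (k-j) j
  have e1 := h1 (k-j) j
  obtain ⟨m, hm⟩ := Int.eq_ofNat_of_zero_le e0
  rw [hm] at e1 ⊢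
  rw [← Finset.sum_filter]
  have : (Finset.Icc 1 k).filter (fun y : ℕ => (y:ℤ) ≤ (m:ℤ)) = Finset.Icc 1 m := by
    ext y; simp only [Finset.mem_filter, Finset.mem_Icc]; omega
  rw [this]; simp

/-- pushed rearrangement -/
def push (C : ℕ → ℕ → ℤ) (i j : ℕ) : ℤ :=
  (((Finset.Icc 1 j).filter (fun y => j < y + (lev C (i+j) y).card)).card : ℤ)

theorem card_down (P : ℕ → Prop) [DecidablePred P] (j y : ℕ) (hy : 1 ≤ y)
    (hP : ∀ y, 1 ≤ y → y + 1 ≤ j → P (y+1) → P y) :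
    y ≤ ((Finset.Icc 1 j).filter P).card ↔ y ≤ j ∧ P y := by
  have hdown : ∀ d y, 1 ≤ y → y + d ≤ j → P (y+d) → P y := by
    intro d
    induction d with
    | zero => intro y _ _ h; exact h
    | succ d ih => intro y h1 h2 h3; exact ih y h1 (by omega) (hP (y+d) (by omega) (by omega) h3)
  constructor
  · intro h
    by_contra hc
    have : (Finset.Icc 1 j).filter P ⊆ Finset.Icc 1 (y-1) := by
      intro z hz
      rw [Finset.mem_filter, Finset.mem_Icc] at hz
      rw [Finset.mem_Icc]
      refine ⟨hz.1.1, ?_⟩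
      by_contra hzy
      apply hc
      refine ⟨by omega, hdown (z - y) y hy (by omega) ?_⟩
      rw [show y + (z-y) = z by omega]; exact hz.2
    have := Finset.card_le_card this
    rw [Nat.card_Icc] at this
    omega
  · rintro ⟨h1, h2⟩
    have : Finset.Icc 1 y ⊆ (Finset.Icc 1 j).filter P := by
      intro z hz
      rw [Finset.mem_Icc] at hz
      rw [Finset.mem_filter, Finset.mem_Icc]
      refine ⟨by omega, hdown (y-z) z hz.1 (by omega) ?_⟩
      rw [show z + (y-z) = y by omega]; exact h2
    have := Finset.card_le_card this
    rw [Nat.card_Icc] at this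
    omega

theorem Ht.push_iff {n C} (h : Ht n C) {i j y : ℕ} (hy : 1 ≤ y) :
    (y:ℤ) ≤ push C i j ↔ y ≤ j ∧ j < y + (lev C (i+j) y).card := by
  rw [push, Nat.cast_le]
  apply card_down _ _ _ hy
  intro z hz hzj hp
  obtain ⟨k, hk⟩ : ∃ k, i + j = k + 1 := ⟨i+j-1, by omega⟩
  have hpos : 0 < (lev C (k+1) (z+1)).card := by rw [← hk]; omega
  have b1 := h.lev_b hpos
  have b2 := h.lev_a (k := k) (y := z) (by omega)
  rw [hk] at hp ⊢
  omega

theorem Ht.push_nonneg {C : ℕ → ℕ → ℤ} (i j : ℕ) : 0 ≤ push C i j := by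
  rw [push]; positivity

theorem le_of_lev {a b : ℤ} (ha : 0 ≤ a) (hb : 0 ≤ b) (h : ∀ y : ℕ, 1 ≤ y → (y:ℤ) ≤ a → (y:ℤ) ≤ b) : a ≤ b := by
  obtain ⟨m, rfl⟩ := Int.eq_ofNat_of_zero_le ha
  by_cases hm : 1 ≤ m
  · exact h m hm le_rfl
  · omega

theorem Ht.push_le1 {n C} (h : Ht n C) (i j : ℕ) : push C i j ≤ i := by
  apply le_of_lev (Ht.push_nonneg i j) (by positivity)
  intro y hy hle
  rw [h.push_iff hy] at hle
  have := h.lev_le (k := i+j) (y := y) (by omega)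
  omega

theorem Ht.push_le2 {n C} (h : Ht n C) (i j : ℕ) : push C i j ≤ j := by
  apply le_of_lev (Ht.push_nonneg i j) (by positivity)
  intro y hy hle
  rw [h.push_iff hy] at hle
  omega

theorem Ht.push {n C} (h : Ht n C) : Ht n (push C) where
  z1 j := le_antisymm (h.push_le1 0 j) (Ht.push_nonneg _ _)
  z2 i := le_antisymm (h.push_le2 i 0) (Ht.push_nonneg _ _)
  r1 i j := by
    apply le_of_lev (Ht.push_nonneg _ _) (Ht.push_nonneg _ _)
    intro y hy hle
    rw [h.push_iff hy] at hle ⊢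
    have := h.lev_a (k := i+j) (y := y) (by omega)
    rw [show i + 1 + j = i + j + 1 by ring]
    omega
  c1 i j := by
    apply le_of_lev (Ht.push_nonneg _ _) (Ht.push_nonneg _ _)
    intro y hy hle
    rw [h.push_iff hy] at hle ⊢
    have := h.lev_a (k := i+j) (y := y) (by omega)
    rw [show i + (j + 1) = i + j + 1 by ring]
    omega
  r2 i j := by
    have : 0 ≤ _root_.push C i j := Ht.push_nonneg _ _
    apply le_of_lev (Ht.push_nonneg _ _) (by omega)
    intro y hy hle
    obtain ⟨z, rfl⟩ : ∃ z, y = z + 1 := ⟨y - 1, by omega⟩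
    rcases Nat.eq_zero_or_pos z with rfl | hz
    · push_cast; omega
    · have key : (z:ℤ) ≤ _root_.push C i j := by
        rw [h.push_iff hy, show i + 1 + j = i + j + 1 by ring] at hle
        rw [h.push_iff hz]
        have := h.lev_b (k := i+j) (y := z) (by omega)
        omega
      push_cast; omega
  c2 i j := by
    have : 0 ≤ _root_.push C i j := Ht.push_nonneg _ _
    apply le_of_lev (Ht.push_nonneg _ _) (by omega)
    intro y hy hle
    obtain ⟨z, rfl⟩ : ∃ z, y = z + 1 := ⟨y - 1, by omega⟩
    rcases Nat.eq_zero_or_pos z with rfl | hz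
    · push_cast; omega
    · have key : (z:ℤ) ≤ _root_.push C i j := by
        rw [h.push_iff hy, show i + (j + 1) = i + j + 1 by ring] at hle
        rw [h.push_iff hz]
        have := h.lev_b (k := i+j) (y := z) (by omega)
        omega
      push_cast; omega
  b i j hij := by
    apply le_antisymm
    · exact le_min (h.push_le1 i j) (h.push_le2 i j)
    · apply le_of_lev (by positivity) (Ht.push_nonneg _ _)
      intro y hy hle
      rw [le_min_iff] at hle
      rw [h.push_iff hy]
      have hsub : Finset.Icc y (i + j - y) ⊆ lev C (i+j) y := by
        intro l hl
        rw [Finset.mem_Icc] at hl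
        rw [mem_lev]
        refine ⟨by omega, ?_⟩
        by_cases hl' : n ≤ i + j - l ∨ n ≤ l
        · rw [h.b _ _ hl', le_min_iff]; omega
        · have := h.ge (i + j - l) l (by omega) (by omega)
          omega
      have := Finset.card_le_card hsub
      rw [Nat.card_Icc] at this
      omega

theorem Ht.lev_push {n C} (h : Ht n C) {k y : ℕ} (hy : 1 ≤ y) :
    (lev (_root_.push C) k y).card = (lev C k y).card := by
  have : lev (_root_.push C) k y = Finset.Ico y (y + (lev C k y).card) := by
    ext j
    rw [mem_lev, Finset.mem_Ico]
    constructor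
    · rintro ⟨h1, h2⟩
      rw [h.push_iff hy, Nat.sub_add_cancel h1] at h2
      exact h2
    · intro h2
      have := h.lev_le (k := k) (y := y) (by omega)
      have h1 : j ≤ k := by omega
      rw [h.push_iff hy, Nat.sub_add_cancel h1]
      exact ⟨h1, h2⟩
  rw [this]; simp

theorem Ht.adS_push {n C} (h : Ht n C) (k : ℕ) : adS (_root_.push C) k = adS C k := by
  rw [adS_eq h.nonneg h.le1, adS_eq h.push.nonneg h.push.le1]
  apply Finset.sum_congr rfl
  intro y hy
  rw [Finset.mem_Icc] at hy
  rw [h.lev_push hy.1]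

theorem Ht.swap {n C} (h : Ht n C) : Ht n (fun i j => C j i) where
  z1 j := h.z2 j
  z2 i := h.z1 i
  r1 i j := h.c1 j i
  r2 i j := h.c2 j i
  c1 i j := h.r1 j i
  c2 i j := h.r2 j i
  b i j hij := by rw [h.b j i hij.symm, min_comm]

theorem adS_swap (C : ℕ → ℕ → ℤ) (k : ℕ) : adS (fun i j => C j i) k = adS C k := by
  unfold adS
  rw [← Finset.sum_range_reflect]
  apply Finset.sum_congr rfl
  intro j hj
  rw [Finset.mem_range] at hj
  simp only
  congr 1; omega

/-- uniqueness among height functions -/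
def HtDet (n : ℕ) (C : ℕ → ℕ → ℤ) : Prop := ∀ C', Ht n C' → (∀ k, adS C' k = adS C k) → C' = C

theorem exists_trunc {n C} (h : Ht n C) (hd : HtDet n C) :
    ∃ c : ℕ → ℕ, (∀ k, 2 * c k ≤ k) ∧ (∀ k, c k ≤ c (k+1)) ∧ (∀ k, c (k+1) ≤ c k + 1) ∧
      ∀ i j, C i j = min (min (i:ℤ) j) (c (i+j)) := by
  have hp := hd _ h.push h.adS_push
  have hs := hd _ h.swap (adS_swap C)
  have hsymm : ∀ i j, C i j = C j i := fun i j => by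
    conv_lhs => rw [← hs]
  have hmax : ∀ k, ∃ m : ℕ, (∀ i j, i + j = k → C i j ≤ m) ∧ ∃ i j, i + j = k ∧ C i j = m := by
    intro k
    obtain ⟨j, hj, hjm⟩ := Finset.exists_max_image (range (k+1)) (fun j => C (k-j) j) ⟨0, by simp⟩
    rw [Finset.mem_range] at hj
    obtain ⟨m, hm⟩ := Int.eq_ofNat_of_zero_le (h.nonneg (k-j) j)
    refine ⟨m, ?_, k - j, j, by omega, hm⟩
    intro a b hab
    have := hjm b (by rw [Finset.mem_range]; omega)
    rw [show k - b = a by omega, hm] at this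
    exact this
  choose c hc1 hc2 using hmax
  refine ⟨c, ?_, ?_, ?_, ?_⟩
  · intro k
    obtain ⟨i, j, hij, he⟩ := hc2 k
    have := h.le1 i j
    have := h.le2 i j
    omega
  · intro k
    obtain ⟨i, j, hij, he⟩ := hc2 k
    have := h.r1 i j
    have := hc1 (k+1) (i+1) j (by omega)
    omega
  · intro k
    obtain ⟨i, j, hij, he⟩ := hc2 (k+1)
    rcases i with _ | i
    · rcases j with _ | j
      · omega
      · have := h.c2 0 j
        have := hc1 k 0 j (by omega)
        omega
    · have := h.r2 i j
      have := hc1 k i j (by omega)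
      omega
  · intro i j
    apply le_antisymm
    · exact le_min (le_min (h.le1 i j) (h.le2 i j)) (hc1 _ i j rfl)
    · apply le_of_lev (by positivity) (h.nonneg _ _)
      intro y hy hle
      rw [le_min_iff, le_min_iff] at hle
      obtain ⟨a, b, hab, he⟩ := hc2 (i+j)
      have hpos : 0 < (lev C (i+j) y).card := by
        apply Finset.card_pos.mpr
        refine ⟨b, ?_⟩
        rw [← hab, mem_lev', he]; exact hle.2
      have e1 : (y:ℤ) ≤ C (i + j - y) y := by
        conv_rhs => rw [← hp]
        rw [h.push_iff hy, show i + j - y + y = i + j by omega]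
        omega
      rw [hsymm, ← hp, h.push_iff hy, show y + (i + j - y) = i + j by omega] at e1
      rw [← hp, h.push_iff hy]
      omega

theorem det_of_trunc {n C} (h : Ht n C) (c : ℕ → ℕ) (c0 : ∀ k, 2 * c k ≤ k)
    (c2 : ∀ k, k < 2 * n → c (k+1) = c k ∨ c (k+1) = c k + 1)
    (hC : ∀ i j, i + j ≤ 2 * n → C i j = min (min (i:ℤ) j) (c (i+j))) : HtDet n C := by
  intro B hB hsum
  by_contra hne
  have hbig : ∀ i j, 2 * n ≤ i + j → B i j = C i j := by
    intro i j hij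
    have : n ≤ i ∨ n ≤ j := by omega
    rw [h.b i j this, hB.b i j this]
  have hpos : ∀ k, (∃ i j, i + j = k ∧ B i j ≠ C i j) → (∃ i j, i + j = k ∧ B i j > C i j) := by
    rintro k ⟨i, j, hij, hn⟩
    by_contra hcon
    push Not at hcon
    have := (Finset.sum_eq_sum_iff_of_le (s := range (k+1)) (f := fun j => B (k-j) j) (g := fun j => C (k-j) j)
      (fun l hl => hcon _ _ (by rw [Finset.mem_range] at hl; omega))).mp (hsum k) j (by rw [Finset.mem_range]; omega)
    rw [show k - j = i by omega] at this
    exact hn this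
  have hneg : ∀ k, (∃ i j, i + j = k ∧ B i j ≠ C i j) → (∃ i j, i + j = k ∧ B i j < C i j) := by
    rintro k ⟨i, j, hij, hn⟩
    by_contra hcon
    push Not at hcon
    have := (Finset.sum_eq_sum_iff_of_le (s := range (k+1)) (g := fun j => B (k-j) j) (f := fun j => C (k-j) j)
      (fun l hl => hcon _ _ (by rw [Finset.mem_range] at hl; omega))).mp (hsum k).symm j (by rw [Finset.mem_range]; omega)
    rw [show k - j = i by omega] at this
    exact hn this.symm
  have step : ∀ k, k < 2 * n → (∃ i j, i + j = k ∧ B i j ≠ C i j) →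
      (∃ i j, i + j = k + 1 ∧ B i j ≠ C i j) := by
    intro k hk hex
    rcases c2 k hk with hc | hc
    · obtain ⟨i, j, hij, hl⟩ := hpos k hex
      refine ⟨i+1, j, by omega, ?_⟩
      have e1 := hB.le1 i j
      have e2 := hB.le2 i j
      have e3 := hB.r1 i j
      rw [hC i j (by omega), hij] at hl
      rw [hC (i+1) j (by omega), show i + 1 + j = k + 1 by omega, hc]
      omega
    · obtain ⟨i, j, hij, hl⟩ := hneg k hex
      rw [hC i j (by omega), hij] at hl
      have h0 := c0 (k+1)
      by_cases hji : i + 1 ≤ j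
      · refine ⟨i+1, j, by omega, ?_⟩
        have e3 := hB.r2 i j
        rw [hC (i+1) j (by omega), show i + 1 + j = k + 1 by omega, hc]
        omega
      · refine ⟨i, j+1, by omega, ?_⟩
        have e3 := hB.c2 i j
        rw [hC i (j+1) (by omega), show i + (j + 1) = k + 1 by omega, hc]
        omega
  have hex : ∃ i j, B i j ≠ C i j := by
    by_contra hcon
    push Not at hcon
    exact hne (funext fun i => funext fun j => hcon i j)
  obtain ⟨i, j, hij⟩ := hex
  have hlt : i + j < 2 * n := by
    by_contra hcon
    exact hij (hbig i j (by omega))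
  have : ∀ d, i + j + d ≤ 2 * n → ∃ a b, a + b = i + j + d ∧ B a b ≠ C a b := by
    intro d
    induction d with
    | zero => intro _; exact ⟨i, j, rfl, hij⟩
    | succ d ih => intro hd; exact step (i+j+d) (by omega) (ih (by omega))
  obtain ⟨a, b, hab, hne'⟩ := this (2 * n - (i+j)) (by omega)
  exact hne' (hbig a b (by omega))

/-- partial sums of an alternating sequence with total 1 are 0 or 1 -/
theorem alt_partial (n : ℕ) (f : ℕ → ℤ) (he : ∀ j < n, f j = -1 ∨ f j = 0 ∨ f j = 1)
    (hs : ∑ j ∈ range n, f j = 1)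
    (ha : ∀ a b, a < b → b < n → f a ≠ 0 → f b ≠ 0 → (∀ c, a < c → c < b → f c = 0) → f b = - f a)
    (j : ℕ) (hj : j ≤ n) : 0 ≤ ∑ b ∈ range j, f b ∧ ∑ b ∈ range j, f b ≤ 1 := by
  have hex : ∃ b, b < n ∧ f b ≠ 0 := by
    by_contra hc
    push Not at hc
    rw [Finset.sum_eq_zero (fun b hb => hc b (Finset.mem_range.mp hb))] at hs
    exact absurd hs (by norm_num)
  classical
  have hf := Nat.find_spec hex
  have hmin : ∀ b, b < Nat.find hex → f b = 0 := by
    intro b hb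
    have := Nat.find_min hex hb
    by_contra hc
    exact this ⟨by omega, hc⟩
  set m := Nat.find hex
  have hzero : ∀ j, j ≤ m → ∑ b ∈ range j, f b = 0 := fun j hj =>
    Finset.sum_eq_zero (fun b hb => hmin b (by rw [Finset.mem_range] at hb; omega))
  have key : ∀ d, m + 1 + d ≤ n → ∃ b, b < m + 1 + d ∧ (∀ c, b < c → c < m + 1 + d → f c = 0) ∧
      ((f b = f m ∧ ∑ b ∈ range (m+1+d), f b = f m) ∨
        (f b = - f m ∧ ∑ b ∈ range (m+1+d), f b = 0)) := by
    intro d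
    induction d with
    | zero =>
      intro _
      refine ⟨m, by omega, fun c h1 h2 => by omega, Or.inl ⟨rfl, ?_⟩⟩
      rw [add_zero, Finset.sum_range_succ, hzero m le_rfl, zero_add]
    | succ d ih =>
      intro hd
      obtain ⟨b, hb, hz, hor⟩ := ih (by omega)
      rw [show m + 1 + (d+1) = m + 1 + d + 1 by ring, Finset.sum_range_succ]
      by_cases h0 : f (m+1+d) = 0
      · refine ⟨b, by omega, ?_, by rw [h0, add_zero]; exact hor⟩
        intro c h1 h2
        rcases Nat.lt_or_ge c (m+1+d) with h3 | h3
        · exact hz c h1 h3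
        · rw [show c = m+1+d by omega]; exact h0
      · have hbne : f b ≠ 0 := by
          rcases hor with h | h
          · rw [h.1]; exact hf.2
          · rw [h.1]; simpa using hf.2
        have := ha b (m+1+d) hb (by omega) hbne h0 hz
        refine ⟨m+1+d, by omega, fun c h1 h2 => by omega, ?_⟩
        rcases hor with h | h
        · right
          rw [this, h.1, h.2]; simp
        · left
          rw [this, h.1, h.2]; simp
  have hm1 : f m = 1 := by
    obtain ⟨b, _, _, h⟩ := key (n - (m+1)) (by omega)
    rw [show m + 1 + (n - (m+1)) = n by omega, hs] at h
    rcases h with h | h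
    · exact h.2.symm
    · exact absurd h.2 (by norm_num)
  rcases Nat.lt_or_ge m j with h | h
  · obtain ⟨b, _, _, h'⟩ := key (j - (m+1)) (by omega)
    rw [show m + 1 + (j - (m+1)) = j by omega, hm1] at h'
    omega
  · rw [hzero j h]; norm_num

theorem alt_of_partial (P : ℕ → ℤ) (hP : ∀ j, 0 ≤ P j ∧ P j ≤ 1) (a b : ℕ) (hab : a < b)
    (ha : P (a+1) - P a ≠ 0) (hb : P (b+1) - P b ≠ 0)
    (hz : ∀ c, a < c → c < b → P (c+1) - P c = 0) : P (b+1) - P b = -(P (a+1) - P a) := by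
  have : ∀ d, a + 1 + d ≤ b → P (a+1+d) = P (a+1) := by
    intro d
    induction d with
    | zero => intro _; rfl
    | succ d ih =>
      intro hd
      have h1 := ih (by omega)
      have h2 := hz (a+1+d) (by omega) (by omega)
      rw [← add_assoc]; omega
  have h := this (b - (a+1)) (by omega)
  rw [show a + 1 + (b - (a+1)) = b by omega] at h
  have := hP (a+1)
  have := hP a
  have := hP b
  have := hP (b+1)
  omega

/-- zero extension -/
def ext0 {n : ℕ} (A : Matrix (Fin n) (Fin n) ℤ) (a b : ℕ) : ℤ :=
  if h : a < n ∧ b < n then A ⟨a, h.1⟩ ⟨b, h.2⟩ else 0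

/-- identity outside the square -/
def idn (n a b : ℕ) : ℤ := if a < n ∧ b < n then 0 else if a = b then 1 else 0

/-- extension by the identity -/
def extA {n : ℕ} (A : Matrix (Fin n) (Fin n) ℤ) (a b : ℕ) : ℤ := ext0 A a b + idn n a b

/-- corner sums -/
def cs (f : ℕ → ℕ → ℤ) (i j : ℕ) : ℤ := ∑ a ∈ range i, ∑ b ∈ range j, f a b

theorem ext_in {n : ℕ} (A : Matrix (Fin n) (Fin n) ℤ) (a b : ℕ) (ha : a < n) (hb : b < n) :
    extA A a b = A ⟨a, ha⟩ ⟨b, hb⟩ := by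
  simp [extA, ext0, idn, ha, hb]

theorem ext_out {n : ℕ} (A : Matrix (Fin n) (Fin n) ℤ) (a b : ℕ) (h : ¬ (a < n ∧ b < n)) :
    extA A a b = if a = b then 1 else 0 := by
  simp only [extA, ext0, idn, dif_neg h, if_neg h, zero_add]

theorem ext_tr {n : ℕ} (A : Matrix (Fin n) (Fin n) ℤ) (a b : ℕ) : extA Aᵀ a b = extA A b a := by
  by_cases h : a < n ∧ b < n
  · rw [ext_in _ _ _ h.1 h.2, ext_in _ _ _ h.2 h.1]; rfl
  · rw [ext_out _ _ _ h, ext_out _ _ _ (fun hc => h hc.symm)]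
    simp only [eq_comm]

theorem cs_tr {n : ℕ} (A : Matrix (Fin n) (Fin n) ℤ) (i j : ℕ) :
    cs (extA Aᵀ) i j = cs (extA A) j i := by
  unfold cs
  rw [Finset.sum_comm]
  simp only [ext_tr]

theorem IsASM.tr {n : ℕ} {A : Matrix (Fin n) (Fin n) ℤ} (h : IsASM A) : IsASM Aᵀ :=
  ⟨fun i j => h.1 j i, h.2.2.1, h.2.1, h.2.2.2.2, h.2.2.2.1⟩

theorem ext_row {n : ℕ} {A : Matrix (Fin n) (Fin n) ℤ} (h : IsASM A) (i : ℕ) (hi : i < n) :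
    ∑ b ∈ range n, extA A i b = 1 := by
  rw [← Fin.sum_univ_eq_sum_range, ← h.2.1 ⟨i, hi⟩]
  apply Finset.sum_congr rfl
  intro b _
  rw [ext_in _ _ _ hi b.2]

theorem ext_out_sum {n : ℕ} (A : Matrix (Fin n) (Fin n) ℤ) (i j : ℕ) (hi : n ≤ i) :
    ∑ b ∈ range j, extA A i b = if i < j then 1 else 0 := by
  rw [Finset.sum_congr rfl (fun b _ => ext_out A i b (by omega))]
  simp

theorem ext_partial {n : ℕ} {A : Matrix (Fin n) (Fin n) ℤ} (h : IsASM A) (i j : ℕ) :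
    0 ≤ ∑ b ∈ range j, extA A i b ∧ ∑ b ∈ range j, extA A i b ≤ 1 := by
  rcases Nat.lt_or_ge i n with hi | hi
  · rcases Nat.lt_or_ge n j with hj | hj
    · have : ∑ b ∈ range j, extA A i b = ∑ b ∈ range n, extA A i b := by
        symm
        apply Finset.sum_subset
        · intro x hx; rw [Finset.mem_range] at *; omega
        · intro x _ hx
          rw [Finset.mem_range] at hx
          rw [ext_out _ _ _ (by omega), if_neg (by omega)]
      rw [this, ext_row h i hi]; norm_num
    · apply alt_partial n _ _ (ext_row h i hi) _ j hj
      · intro b hb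
        rw [ext_in _ _ _ hi hb]; exact h.1 _ _
      · intro a b hab hb ha0 hb0 hz
        have ha : a < n := by omega
        rw [ext_in _ _ _ hi hb] at hb0 ⊢
        rw [ext_in _ _ _ hi ha] at ha0 ⊢
        apply h.2.2.2.1 _ _ _ hab ha0 hb0
        intro c h1 h2
        have := hz c h1 h2
        rwa [ext_in _ _ _ hi c.2] at this
  · rw [ext_out_sum A i j hi]; split_ifs <;> norm_num

theorem cs_succ (f : ℕ → ℕ → ℤ) (i j : ℕ) : cs f (i+1) j = cs f i j + ∑ b ∈ range j, f i b := by
  simp [cs, Finset.sum_range_succ]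

theorem cs_succ2 (f : ℕ → ℕ → ℤ) (i j : ℕ) : cs f i (j+1) = cs f i j + ∑ a ∈ range i, f a j := by
  simp [cs, Finset.sum_range_succ, Finset.sum_add_distrib]

theorem cs_b {n : ℕ} {A : Matrix (Fin n) (Fin n) ℤ} (h : IsASM A) (i j : ℕ) (hi : n ≤ i) :
    cs (extA A) i j = min (i:ℤ) j := by
  induction i, hi using Nat.le_induction with
  | base =>
    induction j with
    | zero => simp [cs]
    | succ j ih =>
      rw [cs_succ2, ih]
      have e : ∑ a ∈ range n, extA A a j = ∑ a ∈ range n, extA Aᵀ j a := by simp only [ext_tr]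
      rw [e]
      rcases Nat.lt_or_ge j n with hj | hj
      · rw [ext_row h.tr j hj]; push_cast; omega
      · rw [ext_out_sum _ _ _ hj, if_neg (by omega)]; push_cast; omega
  | succ i hi ih =>
    rw [cs_succ, ih, ext_out_sum A i j hi]
    split_ifs <;> push_cast <;> omega

theorem IsASM.ht {n : ℕ} {A : Matrix (Fin n) (Fin n) ℤ} (h : IsASM A) : Ht n (cs (extA A)) where
  z1 j := by simp [cs]
  z2 i := by simp [cs]
  r1 i j := by rw [cs_succ]; have := ext_partial h i j; omega
  r2 i j := by rw [cs_succ]; have := ext_partial h i j; omega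
  c1 i j := by
    rw [← cs_tr A (j+1) i, ← cs_tr A j i, cs_succ]; have := ext_partial h.tr j i; omega
  c2 i j := by
    rw [← cs_tr A (j+1) i, ← cs_tr A j i, cs_succ]; have := ext_partial h.tr j i; omega
  b i j hij := by
    rcases hij with hi | hj
    · exact cs_b h i j hi
    · rw [← cs_tr A j i, cs_b h.tr j i hj, min_comm]

/-- second difference matrix -/
def mat (n : ℕ) (C : ℕ → ℕ → ℤ) : Matrix (Fin n) (Fin n) ℤ := fun i j =>
  C (i+1) (j+1) - C i (j+1) - C (i+1) j + C i j

theorem cs_diff (f : ℕ → ℕ → ℤ) (i j : ℕ) :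
    cs f (i+1) (j+1) - cs f i (j+1) - cs f (i+1) j + cs f i j = f i j := by
  rw [cs_succ, cs_succ, Finset.sum_range_succ]; ring

theorem mat_cs {n : ℕ} (A : Matrix (Fin n) (Fin n) ℤ) : mat n (cs (extA A)) = A := by
  ext i j
  rw [mat, cs_diff, ext_in _ _ _ i.2 j.2]

theorem ext_mat {n C} (h : Ht n C) (a b : ℕ) :
    extA (mat n C) a b = C (a+1) (b+1) - C a (b+1) - C (a+1) b + C a b := by
  by_cases hab : a < n ∧ b < n
  · rw [ext_in _ _ _ hab.1 hab.2]; rfl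
  · rw [ext_out _ _ _ hab, h.b a b (by omega), h.b (a+1) b (by omega), h.b a (b+1) (by omega),
      h.b (a+1) (b+1) (by omega)]
    push_cast
    split_ifs <;> omega

theorem cs_mat {n C} (h : Ht n C) : cs (extA (mat n C)) = C := by
  funext i j
  have hrow : ∀ a, ∑ b ∈ range j, extA (mat n C) a b = C (a+1) j - C a j := by
    intro a
    induction j with
    | zero => simp [h.z2]
    | succ j ih => rw [Finset.sum_range_succ, ih, ext_mat h]; ring
  induction i with
  | zero => simp [cs, h.z1]
  | succ i ih => rw [cs_succ, ih, hrow]; ring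

theorem mat_swap (n : ℕ) (C : ℕ → ℕ → ℤ) : mat n (fun i j => C j i) = (mat n C)ᵀ := by
  ext i j
  simp only [mat, Matrix.transpose_apply]
  ring

theorem mat_row {n C} (h : Ht n C) : (∀ i, ∑ j, mat n C i j = 1) ∧
    (∀ i (j₁ j₂ : Fin n), j₁ < j₂ → mat n C i j₁ ≠ 0 → mat n C i j₂ ≠ 0 →
    (∀ j, j₁ < j → j < j₂ → mat n C i j = 0) → mat n C i j₂ = -mat n C i j₁) := by
  constructor
  · intro i
    have : ∀ m, ∑ j ∈ range m, (C (i+1) (j+1) - C i (j+1) - C (i+1) j + C i j) = C (i+1) m - C i m := by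
      intro m
      induction m with
      | zero => simp [h.z2]
      | succ j ih => rw [Finset.sum_range_succ, ih]; ring
    have h2 := this n
    rw [← Fin.sum_univ_eq_sum_range (fun j => C (i+1) (j+1) - C i (j+1) - C (i+1) j + C i j) n,
      h.b _ n (Or.inr le_rfl), h.b _ n (Or.inr le_rfl)] at h2
    have := i.2
    rw [show ∑ j, mat n C i j = _ from h2]
    push_cast
    omega
  · intro i a b hab ha hb hz
    have e : ∀ j : Fin n, mat n C i j = (C (i+1) (j+1) - C i (j+1)) - (C (i+1) j - C i j) := by
      intro j; rw [mat]; ring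
    rw [e] at ha hb ⊢
    rw [e a]
    apply alt_of_partial (fun j => C (i+1) j - C i j) _ a b hab ha hb
    · intro c h1 h2
      have := hz ⟨c, by omega⟩ h1 h2
      rwa [e] at this
    · intro j
      have := h.r1 i j
      have := h.r2 i j
      constructor <;> linarith

theorem Ht.isASM {n C} (h : Ht n C) : IsASM (mat n C) := by
  have hr := mat_row h
  have hc := mat_row h.swap
  rw [mat_swap] at hc
  refine ⟨?_, hr.1, hc.1, hr.2, hc.2⟩
  intro i j
  simp only [mat]
  have := h.r1 i j
  have := h.r2 i j
  have := h.r1 i (j+1)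
  have := h.r2 i (j+1)
  omega

theorem xray_succ {n : ℕ} (A : Matrix (Fin n) (Fin n) ℤ) (m : ℕ) : xray A (m+1) = adS (ext0 A) m := by
  have e1 : xray A (m+1) = ∑ b ∈ range n, ∑ a ∈ range n, if a + b = m then ext0 A a b else 0 := by
    rw [xray, Finset.sum_comm,
      ← Fin.sum_univ_eq_sum_range (fun b => ∑ a ∈ range n, if a + b = m then ext0 A a b else 0) n]
    apply Finset.sum_congr rfl
    intro b _
    rw [← Fin.sum_univ_eq_sum_range (fun a => if a + b = m then ext0 A a b else 0) n]
    apply Finset.sum_congr rfl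
    intro a _
    simp [ext0]
  have e2 : ∀ b ∈ range n, (∑ a ∈ range n, if a + b = m then ext0 A a b else 0)
      = if b < m + 1 then ext0 A (m-b) b else 0 := by
    intro b hb
    split_ifs with hbm
    · have : ∀ a ∈ range n, (if a + b = m then ext0 A a b else 0) = if a = m - b then ext0 A a b else 0 := by
        intro a _
        congr 1
        simp only [eq_iff_iff]; omega
      rw [Finset.sum_congr rfl this, Finset.sum_ite_eq']
      split_ifs with hh
      · rfl
      · rw [Finset.mem_range] at hh
        rw [ext0, dif_neg (by omega)]
    · apply Finset.sum_eq_zero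
      intro a _
      rw [if_neg (by omega)]
  rw [e1, Finset.sum_congr rfl e2, adS, ← Finset.sum_filter]
  apply Finset.sum_subset
  · intro x hx
    rw [Finset.mem_filter] at hx
    exact Finset.mem_range.mpr hx.2
  · intro x hx hx2
    rw [Finset.mem_filter, Finset.mem_range] at hx2
    rw [Finset.mem_range] at hx
    rw [ext0, dif_neg]
    rintro ⟨_, h2⟩
    exact hx2 ⟨h2, hx⟩

theorem xray_zero {n : ℕ} (A : Matrix (Fin n) (Fin n) ℤ) : xray A 0 = 0 := by
  simp [xray]

theorem adS_ext {n : ℕ} (A : Matrix (Fin n) (Fin n) ℤ) (m : ℕ) :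
    adS (extA A) m = xray A (m+1) + adS (idn n) m := by
  rw [xray_succ]
  simp [adS, extA, Finset.sum_add_distrib]

theorem adS_cs (f : ℕ → ℕ → ℤ) (m : ℕ) :
    adS f m = adS (cs f) (m+2) - 2 * adS (cs f) (m+1) + adS (cs f) m := by
  have hz1 : ∀ j, cs f 0 j = 0 := by intro j; simp [cs]
  have hz2 : ∀ j, cs f j 0 = 0 := by intro j; simp [cs]
  have e1 : adS (cs f) (m+2) = ∑ j ∈ range (m+1), cs f (m-j+1) (j+1) := by
    rw [adS, Finset.sum_range_succ, Finset.sum_range_succ']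
    simp only [Nat.sub_self, hz1, hz2, add_zero]
    apply Finset.sum_congr rfl
    intro j hj
    rw [Finset.mem_range] at hj
    rw [show m + 2 - (j+1) = m - j + 1 by omega]
  have e2 : adS (cs f) (m+1) = ∑ j ∈ range (m+1), cs f (m-j) (j+1) := by
    rw [adS, Finset.sum_range_succ']
    simp only [hz2, add_zero]
    apply Finset.sum_congr rfl
    intro j hj
    rw [show m + 1 - (j+1) = m - j by omega]
  have e3 : adS (cs f) (m+1) = ∑ j ∈ range (m+1), cs f (m-j+1) j := by
    rw [adS, Finset.sum_range_succ]
    simp only [Nat.sub_self, hz1, add_zero]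
    apply Finset.sum_congr rfl
    intro j hj
    rw [Finset.mem_range] at hj
    rw [show m + 1 - j = m - j + 1 by omega]
  have : adS f m = adS (cs f) (m+2) - adS (cs f) (m+1) - adS (cs f) (m+1) + adS (cs f) m := by
    rw [e1]
    nth_rewrite 1 [e2]
    rw [e3]
    simp only [adS]
    rw [← Finset.sum_sub_distrib, ← Finset.sum_sub_distrib, ← Finset.sum_add_distrib]
    apply Finset.sum_congr rfl
    intro j _
    rw [cs_diff]
  rw [this]; ring

theorem xray_iff {n : ℕ} (A B : Matrix (Fin n) (Fin n) ℤ) :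
    (∀ k, xray B k = xray A k) ↔ ∀ k, adS (cs (extA B)) k = adS (cs (extA A)) k := by
  constructor
  · intro h
    have h2 : ∀ m, adS (extA B) m = adS (extA A) m := fun m => by rw [adS_ext, adS_ext, h]
    have : ∀ k, adS (cs (extA B)) k = adS (cs (extA A)) k ∧
        adS (cs (extA B)) (k+1) = adS (cs (extA A)) (k+1) := by
      intro k
      induction k with
      | zero => simp [adS, cs, Finset.sum_range_succ]
      | succ k ih =>
        refine ⟨ih.2, ?_⟩
        have e1 := adS_cs (extA A) k
        have e2 := adS_cs (extA B) k
        have e3 := h2 k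
        rw [show k + 1 + 1 = k + 2 by ring]
        linarith [ih.1, ih.2]
    exact fun k => (this k).1
  · intro h k
    rcases k with _ | m
    · rw [xray_zero, xray_zero]
    · have e1 := adS_ext A m
      have e2 := adS_ext B m
      rw [adS_cs, h, h, h, ← adS_cs] at e2
      linarith

theorem det_iff {n : ℕ} {A : Matrix (Fin n) (Fin n) ℤ} :
    DeterminedByXray A ↔ HtDet n (cs (extA A)) := by
  constructor
  · intro h C hC hs
    have := h (mat n C) hC.isASM ((xray_iff _ _).mpr (by rw [cs_mat hC]; exact hs))
    rw [← this, cs_mat hC]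
  · intro h B hB hs
    have := h _ hB.ht ((xray_iff _ _).mp hs)
    rw [← mat_cs B, this, mat_cs]

/-- truncation of the extremal height function by a path -/
def trunc (n : ℕ) (c : ℕ → ℕ) (i j : ℕ) : ℤ :=
  if n ≤ i ∨ n ≤ j then min (i:ℤ) j else min (min (i:ℤ) j) (c (i+j))

/-- admissible paths -/
structure Pth (n : ℕ) (c : ℕ → ℕ) : Prop where
  h0 : ∀ k, 2 * c k ≤ k
  h1 : ∀ k, c k ≤ c (k+1)
  h2 : ∀ k, c (k+1) ≤ c k + 1
  hn : c (2 * n) = n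

theorem Pth.low {n c} (h : Pth n c) (k : ℕ) (hk : k ≤ 2 * n) : k ≤ c k + n := by
  have : ∀ m, c (k + m) ≤ c k + m := by
    intro m
    induction m with
    | zero => simp
    | succ m ih => have := h.h2 (k+m); rw [← add_assoc]; omega
  have h3 := this (2 * n - k)
  rw [Nat.add_sub_cancel' hk, h.hn] at h3
  omega

theorem Pth.eq {n c} (h : Pth n c) (i j : ℕ) (hk : i + j ≤ 2 * n) :
    trunc n c i j = min (min (i:ℤ) j) (c (i+j)) := by
  unfold trunc
  have := h.low _ hk
  split_ifs with hh
  · omega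
  · rfl

theorem Pth.ht {n c} (h : Pth n c) : Ht n (trunc n c) := by
  have key : ∀ i j, trunc n c i j ≤ trunc n c (i+1) j ∧ trunc n c (i+1) j ≤ trunc n c i j + 1 := by
    intro i j
    by_cases hh : n ≤ i ∨ n ≤ j
    · unfold trunc
      rw [if_pos hh, if_pos (by omega)]
      push_cast; omega
    · rw [h.eq i j (by omega), h.eq (i+1) j (by omega)]
      have e : i + 1 + j = i + j + 1 := by omega
      have := h.h1 (i+j)
      have := h.h2 (i+j)
      rw [e]
      push_cast; omega
  have sw : ∀ i j, trunc n c i j = trunc n c j i := by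
    intro i j
    unfold trunc
    rw [min_comm (i:ℤ) j, add_comm i j]
    simp only [or_comm]
  refine ⟨?_, ?_, fun i j => (key i j).1, fun i j => (key i j).2, ?_, ?_, ?_⟩
  · intro j; unfold trunc; split_ifs <;> push_cast <;> omega
  · intro j; unfold trunc; split_ifs <;> push_cast <;> omega
  · intro i j; rw [sw i j, sw i (j+1)]; exact (key j i).1
  · intro i j; rw [sw i j, sw i (j+1)]; exact (key j i).2
  · intro i j hij; unfold trunc; rw [if_pos hij]

theorem Pth.det {n c} (h : Pth n c) : HtDet n (trunc n c) := by
  apply det_of_trunc h.ht c h.h0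
  · intro k _
    have := h.h1 k
    have := h.h2 k
    omega
  · exact fun i j hij => h.eq i j hij

theorem Pth.val {n c} (h : Pth n c) (k : ℕ) (hk : k ≤ 2 * n) :
    (c k : ℤ) = trunc n c (k - k/2) (k/2) := by
  rw [h.eq _ _ (by omega)]
  have e : k - k/2 + k/2 = k := by omega
  rw [e]
  have := h.h0 k
  omega

/-- number of down steps in a prefix -/
def cnt (l : List DyckStep) (k : ℕ) : ℕ := (l.take k).count DyckStep.D

theorem count_UD (l : List DyckStep) :
    l.count DyckStep.U + l.count DyckStep.D = l.length := by
  induction l with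
  | nil => rfl
  | cons a l ih => cases a <;> simp [List.count_cons] <;> omega

theorem cnt_succ (l : List DyckStep) (k : ℕ) (hk : k < l.length) :
    cnt l (k+1) = cnt l k + if l[k] = DyckStep.D then 1 else 0 := by
  unfold cnt
  rw [List.take_succ_eq_append_getElem hk, List.count_append]
  simp [List.count_singleton]

theorem cnt_ge (l : List DyckStep) (k : ℕ) (hk : l.length ≤ k) :
    cnt l k = l.count DyckStep.D := by
  unfold cnt
  rw [List.take_of_length_le hk]

theorem cnt_pth (p : DyckWord) (n : ℕ) (hp : p.semilength = n) : Pth n (cnt p.toList) := by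
  have hl := p.two_mul_semilength_eq_length
  refine ⟨?_, ?_, ?_, ?_⟩
  · intro k
    have h1 := p.count_D_le_count_U k
    have h2 := count_UD (p.toList.take k)
    have h3 := List.length_take_le k p.toList
    unfold cnt
    omega
  · intro k
    by_cases hk : k < p.toList.length
    · rw [cnt_succ _ _ hk]; omega
    · rw [cnt_ge _ _ (by omega), cnt_ge _ _ (by omega)]
  · intro k
    by_cases hk : k < p.toList.length
    · rw [cnt_succ _ _ hk]; split_ifs <;> omega
    · rw [cnt_ge _ _ (by omega), cnt_ge _ _ (by omega)]; omega
  · rw [cnt_ge _ _ (by omega), ← p.semilength_eq_count_D, hp]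

theorem cnt_inj (l l' : List DyckStep) (h : l.length = l'.length)
    (hc : ∀ k, k ≤ l.length → cnt l k = cnt l' k) : l = l' := by
  apply List.ext_getElem h
  intro k h1 h2
  have e1 := cnt_succ l k h1
  have e2 := cnt_succ l' k h2
  rw [hc _ h1, hc _ h1.le, e2] at e1
  have e3 : (if l'[k] = DyckStep.D then 1 else 0) = (if l[k] = DyckStep.D then 1 else 0) := by omega
  rcases l[k].dichotomy with h | h <;> rcases l'[k].dichotomy with h' | h' <;>
    simp [h, h'] at e3 ⊢

/-- the word of a path -/
def wordOf (n : ℕ) (c : ℕ → ℕ) : List DyckStep :=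
  (List.range (2 * n)).map (fun k => if c (k+1) = c k then DyckStep.U else DyckStep.D)

theorem wordOf_length (n c) : (wordOf n c).length = 2 * n := by simp [wordOf]

theorem cnt_wordOf {n c} (h : Pth n c) (k : ℕ) (hk : k ≤ 2 * n) : cnt (wordOf n c) k = c k := by
  induction k with
  | zero => have := h.h0 0; simp [cnt]; omega
  | succ k ih =>
    rw [cnt_succ _ _ (by rw [wordOf_length]; omega), ih (by omega)]
    have h1 := h.h1 k
    have h2 := h.h2 k
    by_cases hc : c (k+1) = c k
    · simp [wordOf, hc]
    · simp [wordOf, hc]; omega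

theorem exists_word {n c} (h : Pth n c) : ∃ p : DyckWord, p.semilength = n ∧
    ∀ k, k ≤ 2 * n → cnt p.toList k = c k := by
  have hl := wordOf_length n c
  have hU := count_UD (wordOf n c)
  have hD : (wordOf n c).count DyckStep.D = n := by
    rw [← cnt_ge (wordOf n c) (2 * n) hl.le, cnt_wordOf h _ le_rfl, h.hn]
  have h2 : ∀ k, k ≤ 2 * n → ((wordOf n c).take k).count DyckStep.D ≤
      ((wordOf n c).take k).count DyckStep.U := by
    intro k hk
    have e1 := count_UD ((wordOf n c).take k)
    have e2 := cnt_wordOf h k hk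
    have e3 := h.h0 k
    unfold cnt at e2
    rw [List.length_take, hl] at e1
    omega
  refine ⟨⟨wordOf n c, by omega, ?_⟩, ?_, fun k hk => cnt_wordOf h k hk⟩
  · intro k
    rcases le_total k (2 * n) with hk | hk
    · exact h2 k hk
    · have := h2 (2 * n) le_rfl
      rw [List.take_of_length_le hl.le] at this
      rwa [List.take_of_length_le (by omega)]
  · show (wordOf n c).count DyckStep.U = n
    omega

/-- the matrix of a word -/
def matOf (n : ℕ) (p : {p : DyckWord // p.semilength = n}) : Matrix (Fin n) (Fin n) ℤ :=
  mat n (trunc n (cnt p.1.toList))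

theorem matOf_inj (n : ℕ) : Function.Injective (matOf n) := by
  intro p q hpq
  have hp := cnt_pth p.1 n p.2
  have hq := cnt_pth q.1 n q.2
  have e : trunc n (cnt p.1.toList) = trunc n (cnt q.1.toList) := by
    rw [← cs_mat hp.ht, ← cs_mat hq.ht]
    exact congrArg (fun M => cs (extA M)) hpq
  have lp := p.1.two_mul_semilength_eq_length
  have lq := q.1.two_mul_semilength_eq_length
  rw [p.2] at lp
  rw [q.2] at lq
  apply Subtype.ext
  apply DyckWord.ext
  apply cnt_inj _ _ (by omega)
  intro k hk
  have h1 := hp.val k (by omega)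
  have h2 := hq.val k (by omega)
  rw [e, ← h2] at h1
  exact_mod_cast h1

theorem matOf_range (n : ℕ) :
    Set.range (matOf n) = {A : Matrix (Fin n) (Fin n) ℤ | IsASM A ∧ DeterminedByXray A} := by
  ext A
  constructor
  · rintro ⟨p, rfl⟩
    have hp := cnt_pth p.1 n p.2
    have hA : IsASM (matOf n p) := hp.ht.isASM
    refine ⟨hA, ?_⟩
    rw [det_iff, matOf, cs_mat hp.ht]
    exact hp.det
  · rintro ⟨hA, hd⟩
    rw [det_iff] at hd
    obtain ⟨c, h0, h1, h2, hC⟩ := exists_trunc hA.ht hd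
    have hn : c (2 * n) = n := by
      have e1 := hC n n
      rw [hA.ht.b n n (Or.inl le_rfl), ← two_mul] at e1
      have := h0 (2 * n)
      omega
    have hp : Pth n c := ⟨h0, h1, h2, hn⟩
    obtain ⟨p, hs, hc⟩ := exists_word hp
    refine ⟨⟨p, hs⟩, ?_⟩
    have e : trunc n (cnt p.toList) = cs (extA A) := by
      funext i j
      unfold trunc
      split_ifs with hh
      · rw [hA.ht.b i j hh]
      · rw [hC, hc _ (by omega)]
    rw [matOf]
    simp only [e]
    exact mat_cs A

theorem stmt_12 (n : ℕ) :
    Set.ncard {A : Matrix (Fin n) (Fin n) ℤ | IsASM A ∧ DeterminedByXray A} =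
      (2 * n).choose n / (n + 1) := by
  rw [← matOf_range, ← Set.image_univ, Set.ncard_image_of_injective _ (matOf_inj n),
    Set.ncard_univ, Nat.card_eq_fintype_card, DyckWord.card_dyckWord_semilength_eq_catalan,
    catalan_eq_centralBinom_div, Nat.centralBinom]
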